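/- arXiv:2605.03595 — 3 statements merged into one kernel-verified Lean document; each statement's English description precedes it below -/
import Mathlib

section
/- Let Δt > 0 and define g(x) = x + 4x(1 - x²)Δt on ℝ. If x₀ ∈ ℝ satisfies x₀² ≥ 1 + 3/(4Δt), then the iterates xₙ = g⁽ⁿ⁾(x₀) (the n-fold iterate of g applied to x₀) satisfy |xₙ| ≥ 2ⁿ |x₀| for every n ∈ ℕ; in particular |xₙ| → ∞ as n → ∞. -/
open Filter Set

section DoubleWell

variable {E : Type*} [SeminormedAddCommGroup E] {Δt c : ℝ} {x : E}

variable (E) in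
/-- For `0 < Δt`, the region in which the multiplier `1 + 4 (1 - ‖x‖²) Δt` of the double-well Euler
step is at most `-c`, so that the step overshoots the origin and expands norms by a factor of at
least `c`. -/
def doubleWellExpansionRegion (Δt c : ℝ) : Set E :=
  {x | 1 + (c + 1) / (4 * Δt) ≤ ‖x‖ ^ 2}

theorem mem_doubleWellExpansionRegion_real {x : ℝ} :
    x ∈ doubleWellExpansionRegion ℝ Δt c ↔ 1 + (c + 1) / (4 * Δt) ≤ x ^ 2 := by
  rw [doubleWellExpansionRegion, mem_ofPred_eq, Real.norm_eq_abs, sq_abs]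

theorem norm_pos_of_mem_doubleWellExpansionRegion (hΔt : 0 ≤ Δt) (hc : -1 ≤ c)
    (hx : x ∈ doubleWellExpansionRegion E Δt c) : 0 < ‖x‖ := by
  have hquot : 0 ≤ (c + 1) / (4 * Δt) := div_nonneg (by linarith) (by positivity)
  have hsq : 0 < ‖x‖ ^ 2 := (add_pos_of_pos_of_nonneg one_pos hquot).trans_le hx
  exact (norm_nonneg x).lt_of_ne' (sq_pos_iff.mp hsq)

variable [NormedSpace ℝ E]

/-- The explicit Euler step of size `Δt` for `x' = 4 (1 - ‖x‖²) x`. On an inner product space this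
is the gradient flow `x' = -∇U(x)` of the double-well potential `U(x) = (‖x‖² - 1)²`. -/
def doubleWellEulerStep (Δt : ℝ) (x : E) : E :=
  x + (4 * (1 - ‖x‖ ^ 2) * Δt) • x

theorem doubleWellEulerStep_real (Δt x : ℝ) :
    doubleWellEulerStep Δt x = x + 4 * x * (1 - x ^ 2) * Δt := by
  rw [doubleWellEulerStep, Real.norm_eq_abs, sq_abs, smul_eq_mul]
  ring

theorem norm_doubleWellEulerStep (Δt : ℝ) (x : E) :
    ‖doubleWellEulerStep Δt x‖ = |1 + 4 * (1 - ‖x‖ ^ 2) * Δt| * ‖x‖ := by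
  rw [← Real.norm_eq_abs, ← norm_smul, add_smul, one_smul, doubleWellEulerStep]

theorem mul_norm_le_norm_doubleWellEulerStep (hΔt : 0 < Δt)
    (hx : x ∈ doubleWellExpansionRegion E Δt c) : c * ‖x‖ ≤ ‖doubleWellEulerStep Δt x‖ := by
  have hdrift : c + 1 ≤ (‖x‖ ^ 2 - 1) * (4 * Δt) :=
    (div_le_iff₀ (by positivity)).mp (le_sub_iff_add_le'.mpr hx)
  have hfactor : c ≤ |1 + 4 * (1 - ‖x‖ ^ 2) * Δt| := le_abs.mpr (Or.inr (by linarith))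
  rw [norm_doubleWellEulerStep]
  exact mul_le_mul_of_nonneg_right hfactor (norm_nonneg x)

theorem mapsTo_doubleWellEulerStep (hΔt : 0 < Δt) (hc : 1 ≤ c) :
    MapsTo (doubleWellEulerStep Δt) (doubleWellExpansionRegion E Δt c)
      (doubleWellExpansionRegion E Δt c) := by
  intro x hx
  have hnorm : ‖x‖ ≤ ‖doubleWellEulerStep Δt x‖ :=
    (le_mul_of_one_le_left (norm_nonneg x) hc).trans (mul_norm_le_norm_doubleWellEulerStep hΔt hx)
  exact le_trans hx (pow_le_pow_left₀ (norm_nonneg x) hnorm 2)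

theorem mul_norm_iterate_doubleWellEulerStep_le (hΔt : 0 < Δt) (hc : 1 ≤ c)
    (hx : x ∈ doubleWellExpansionRegion E Δt c) (n : ℕ) :
    c * ‖(doubleWellEulerStep Δt)^[n] x‖ ≤ ‖(doubleWellEulerStep Δt)^[n + 1] x‖ := by
  rw [Function.iterate_succ_apply']
  exact mul_norm_le_norm_doubleWellEulerStep hΔt ((mapsTo_doubleWellEulerStep hΔt hc).iterate n hx)

theorem pow_mul_norm_le_norm_iterate_doubleWellEulerStep (hΔt : 0 < Δt) (hc : 1 ≤ c)
    (hx : x ∈ doubleWellExpansionRegion E Δt c) (n : ℕ) :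
    c ^ n * ‖x‖ ≤ ‖(doubleWellEulerStep Δt)^[n] x‖ :=
  geom_le (u := fun k => ‖(doubleWellEulerStep Δt)^[k] x‖) (zero_le_one.trans hc) n
    fun k _ => mul_norm_iterate_doubleWellEulerStep_le hΔt hc hx k

theorem tendsto_norm_iterate_doubleWellEulerStep (hΔt : 0 < Δt) (hc : 1 < c)
    (hx : x ∈ doubleWellExpansionRegion E Δt c) :
    Tendsto (fun n : ℕ => ‖(doubleWellEulerStep Δt)^[n] x‖) atTop atTop :=
  tendsto_atTop_of_geom_le
    (norm_pos_of_mem_doubleWellExpansionRegion hΔt.le (by linarith) hx) hc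
    (mul_norm_iterate_doubleWellEulerStep_le hΔt hc.le hx)

theorem stmt_1_general (hΔt : 0 < Δt) (hc : 1 < c) (hx : x ∈ doubleWellExpansionRegion E Δt c) :
    (∀ n : ℕ, c ^ n * ‖x‖ ≤ ‖(doubleWellEulerStep Δt)^[n] x‖) ∧
      Tendsto (fun n : ℕ => ‖(doubleWellEulerStep Δt)^[n] x‖) atTop atTop :=
  ⟨pow_mul_norm_le_norm_iterate_doubleWellEulerStep hΔt hc.le hx,
    tendsto_norm_iterate_doubleWellEulerStep hΔt hc hx⟩

end DoubleWell

theorem stmt_1 (Δt : ℝ) (hΔt : 0 < Δt)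
    (g : ℝ → ℝ) (hg : ∀ x, g x = x + 4 * x * (1 - x ^ 2) * Δt)
    (x₀ : ℝ) (hx₀ : x₀ ^ 2 ≥ 1 + 3 / (4 * Δt)) :
    (∀ n : ℕ, |g^[n] x₀| ≥ 2 ^ n * |x₀|) ∧
      Filter.Tendsto (fun n : ℕ => |g^[n] x₀|) Filter.atTop Filter.atTop := by
  obtain rfl : g = doubleWellEulerStep Δt :=
    funext fun x => (hg x).trans (doubleWellEulerStep_real Δt x).symm
  have hmem : x₀ ∈ doubleWellExpansionRegion ℝ Δt 2 :=
    mem_doubleWellExpansionRegion_real.mpr (by rwa [two_add_one_eq_three])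
  exact stmt_1_general hΔt one_lt_two hmem
end

section
/- Let ρ > 0 and λ > 5/2 + 1/(2ρ²). Define β(x) = −8x(x−1)²(x+1) + 2/5 − (4/5)λ(x−1)² for x ∈ ℝ. Then β(x) < 0 for every x ∈ ℝ with (x−1)² ≥ ρ². -/
/-!
If the drift satisfies `(x - a) * b x ≤ κ * (x - a) ^ 2`, the generator factor is at most
`s - 2 * (s * lam - κ) * (x - a) ^ 2`, which decreases in `(x - a) ^ 2` once `κ < s * lam`; the
threshold on `lam` is exactly what makes it negative already at `(x - a) ^ 2 = ρ ^ 2`.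
The double well has `κ = 1` at `a = 1`, because `-4 * x * (x + 1) ≤ 1`.
-/

section CommRing

variable {R : Type*} [CommRing R]

/-- The generator factor `β` of the variant candidate `U = (1 - exp (-lam * ζ)) / lam`, where
`ζ x = (x - a) ^ 2 - ρ ^ 2`, for the diffusion with drift `b` and squared noise intensity
`s = σ ^ 2`: its generator `𝒜 f = b * f' + (s / 2) * f''` gives `𝒜 U = exp (-lam * ζ) * β`.
The radius `ρ` enters only through the exponential. -/
def variantFactor (b : R → R) (s lam a x : R) : R :=
  2 * (x - a) * b x + s - 2 * s * lam * (x - a) ^ 2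

/-- The drift `-V'` of the Langevin equation in the double-well potential
`V x = x ^ 4 - 2 * x ^ 2`, whose wells are at `-1` and `1`. -/
def doubleWellDrift (x : R) : R :=
  -4 * x ^ 3 + 4 * x

theorem variantFactor_doubleWellDrift (s lam x : R) :
    variantFactor doubleWellDrift s lam 1 x =
      -8 * x * (x - 1) ^ 2 * (x + 1) + s - 2 * s * lam * (x - 1) ^ 2 := by
  unfold variantFactor doubleWellDrift
  ring

variable [LinearOrder R] [IsStrictOrderedRing R]

theorem variantFactor_le {b : R → R} {s lam κ a x : R}
    (hb : (x - a) * b x ≤ κ * (x - a) ^ 2) :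
    variantFactor b s lam a x ≤ s - 2 * (s * lam - κ) * (x - a) ^ 2 := by
  unfold variantFactor
  linarith

theorem sub_one_mul_doubleWellDrift_le (x : R) :
    (x - 1) * doubleWellDrift x ≤ (x - 1) ^ 2 := by
  have hquad : -4 * x * (x + 1) ≤ 1 := by linarith [sq_nonneg (2 * x + 1)]
  calc (x - 1) * doubleWellDrift x = -4 * x * (x + 1) * (x - 1) ^ 2 := by
        unfold doubleWellDrift; ring
    _ ≤ (x - 1) ^ 2 := mul_le_of_le_one_left (sq_nonneg _) hquad

end CommRing

section Field

variable {K : Type*} [Field K] [LinearOrder K] [IsStrictOrderedRing K] {s lam ρ x : K}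

theorem variantFactor_neg {b : K → K} {κ a : K} (hs : 0 < s) (hρ : ρ ≠ 0)
    (hlam : κ / s + 1 / (2 * ρ ^ 2) < lam) (hb : (x - a) * b x ≤ κ * (x - a) ^ 2)
    (hx : ρ ^ 2 ≤ (x - a) ^ 2) : variantFactor b s lam a x < 0 := by
  have hgap : s / (2 * ρ ^ 2) < s * lam - κ := by
    calc s / (2 * ρ ^ 2) = s * (κ / s + 1 / (2 * ρ ^ 2)) - κ := by field_simp; ring
      _ < s * lam - κ := by gcongr
  have hcoeff : 0 ≤ s * lam - κ := le_trans (by positivity) hgap.le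
  have hthreshold : s < (s * lam - κ) * (2 * ρ ^ 2) := (div_lt_iff₀ (by positivity)).1 hgap
  calc variantFactor b s lam a x
      ≤ s - 2 * (s * lam - κ) * (x - a) ^ 2 := variantFactor_le hb
    _ ≤ s - 2 * (s * lam - κ) * ρ ^ 2 := by gcongr
    _ < 0 := by linarith

theorem stmt_8_general (hs : 0 < s) (hρ : ρ ≠ 0) (hlam : 1 / s + 1 / (2 * ρ ^ 2) < lam)
    (hx : ρ ^ 2 ≤ (x - 1) ^ 2) :
    -8 * x * (x - 1) ^ 2 * (x + 1) + s - 2 * s * lam * (x - 1) ^ 2 < 0 := by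
  rw [← variantFactor_doubleWellDrift]
  exact variantFactor_neg hs hρ hlam (by simpa using sub_one_mul_doubleWellDrift_le x) hx

end Field

theorem stmt_8 (ρ lam : ℝ) (hρ : 0 < ρ) (hlam : lam > 5 / 2 + 1 / (2 * ρ ^ 2))
    (β : ℝ → ℝ)
    (hβ : ∀ x, β x = -8 * x * (x - 1) ^ 2 * (x + 1) + 2 / 5
        - (4 / 5) * lam * (x - 1) ^ 2) :
    ∀ x : ℝ, (x - 1) ^ 2 ≥ ρ ^ 2 → β x < 0 := by
  intro x hx
  linarith [hβ x, stmt_8_general (s := 2 / 5) (by norm_num) hρ.ne' (by rwa [one_div_div]) hx]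
end

section
/- Let X be a measurable space, κ a Markov transition kernel from X to X, and G₀ ⊆ X a measurable set. Define inductively G_{n+1} = G_n ∪ {x ∈ X : κ(x, G_n) > 2^{−(n+1)}} for n ∈ ℕ. Then each G_n is measurable, the sequence (G_n) is nondecreasing, and for every x ∉ ⋃_{n∈ℕ} G_n one has κ(x, ⋃_{n∈ℕ} G_n) = 0; in particular κ(x, G₀) = 0 for such x. -/
open MeasureTheory ProbabilityTheory

/-!
A point outside `⋃ n, G n` is in particular outside `G (n + 1)`, so from it the kernel charges
`G n` with at most the `n`-th threshold. The layers increase and the thresholds tend to zero, so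
continuity from below forces the mass of the union to vanish.
-/

open Filter Topology
open scoped ENNReal

theorem measure_iUnion_eq_zero_of_monotone_of_tendsto {ι α : Type*} [Preorder ι] [IsDirectedOrder ι]
    [Nonempty ι] [(atTop : Filter ι).IsCountablyGenerated] [MeasurableSpace α] {μ : Measure α}
    {s : ι → Set α} {ε : ι → ℝ≥0∞} (hs : Monotone s) (hε : Tendsto ε atTop (𝓝 0))
    (hle : ∀ i, μ (s i) ≤ ε i) : μ (⋃ i, s i) = 0 :=
  tendsto_nhds_unique (tendsto_measure_iUnion_atTop hs)
    (tendsto_of_tendsto_of_tendsto_of_le_of_le tendsto_const_nhds hε (fun _ ↦ zero_le) hle)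

theorem measurableSet_setOf_lt_kernel_apply {α β : Type*} [MeasurableSpace α] [MeasurableSpace β]
    (κ : Kernel α β) (c : ℝ≥0∞) {s : Set β} (hs : MeasurableSet s) :
    MeasurableSet {a | c < κ a s} :=
  measurableSet_lt measurable_const (κ.measurable_coe hs)

theorem tendsto_ennreal_zpow_neg_atTop_nhds_zero {a : ℝ≥0∞} (ha : 1 < a) :
    Tendsto (fun n : ℕ ↦ a ^ (-n : ℤ)) atTop (𝓝 0) := by
  simpa only [ENNReal.zpow_neg, zpow_natCast, ENNReal.inv_pow] using
    ENNReal.tendsto_pow_atTop_nhds_zero_of_lt_one (ENNReal.inv_lt_one.2 ha)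

/-- The sets `G n` are the layers of states reached backwards from `G 0`: each step adds the
states from which `κ` enters the current layer with mass exceeding the threshold `ε n`. In the
paper `ε n = 2 ^ (-(n + 1))`; the target `G 0` is left free here. -/
def IsReachLayering {X : Type*} [MeasurableSpace X] (κ : Kernel X X) (ε : ℕ → ℝ≥0∞)
    (G : ℕ → Set X) : Prop :=
  ∀ n, G (n + 1) = G n ∪ {x | ε n < κ x (G n)}

namespace IsReachLayering

variable {X : Type*} [MeasurableSpace X] {κ : Kernel X X} {ε : ℕ → ℝ≥0∞} {G : ℕ → Set X}

theorem measurableSet (hG : IsReachLayering κ ε G) (hG₀ : MeasurableSet (G 0)) (n : ℕ) :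
    MeasurableSet (G n) := by
  induction n with
  | zero => exact hG₀
  | succ n ih =>
    rw [hG n]
    exact ih.union (measurableSet_setOf_lt_kernel_apply κ (ε n) ih)

theorem monotone (hG : IsReachLayering κ ε G) : Monotone G :=
  monotone_nat_of_le_succ fun n ↦ (hG n).symm ▸ Set.subset_union_left

theorem apply_le_of_notMem_succ (hG : IsReachLayering κ ε G) {x : X} {n : ℕ}
    (hx : x ∉ G (n + 1)) : κ x (G n) ≤ ε n := by
  rw [hG n] at hx
  exact not_lt.1 fun hlt ↦ hx (Or.inr hlt)

theorem apply_iUnion_eq_zero (hG : IsReachLayering κ ε G) (hε : Tendsto ε atTop (𝓝 0))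
    {x : X} (hx : x ∉ ⋃ n, G n) : κ x (⋃ n, G n) = 0 :=
  measure_iUnion_eq_zero_of_monotone_of_tendsto hG.monotone hε fun n ↦
    hG.apply_le_of_notMem_succ fun hmem ↦ hx (Set.mem_iUnion_of_mem (n + 1) hmem)

end IsReachLayering

theorem stmt_15_general {X : Type*} [MeasurableSpace X] {κ : Kernel X X} {ε : ℕ → ℝ≥0∞}
    {G : ℕ → Set X} (hG₀ : MeasurableSet (G 0)) (hG : IsReachLayering κ ε G)
    (hε : Tendsto ε atTop (𝓝 0)) :
    (∀ n, MeasurableSet (G n)) ∧ Monotone G ∧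
      ∀ x ∉ ⋃ n, G n, κ x (⋃ n, G n) = 0 ∧ κ x (G 0) = 0 := by
  refine ⟨hG.measurableSet hG₀, hG.monotone, fun x hx ↦ ?_⟩
  have hnull : κ x (⋃ n, G n) = 0 := hG.apply_iUnion_eq_zero hε hx
  exact ⟨hnull, measure_mono_null (Set.subset_iUnion G 0) hnull⟩

theorem stmt_15 {X : Type*} [MeasurableSpace X]
    (κ : Kernel X X) [IsMarkovKernel κ]
    (G₀ : Set X) (hG₀ : MeasurableSet G₀)
    (G : ℕ → Set X) (hG0 : G 0 = G₀)
    (hGsucc : ∀ n : ℕ,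
      G (n + 1) = G n ∪ {x : X | κ x (G n) > (2 : ENNReal) ^ (-(n + 1 : ℤ))}) :
    (∀ n, MeasurableSet (G n)) ∧ Monotone G ∧
      ∀ x ∉ ⋃ n, G n, κ x (⋃ n, G n) = 0 ∧ κ x G₀ = 0 := by
  subst hG0
  exact stmt_15_general hG₀ hGsucc <| mod_cast
    (tendsto_ennreal_zpow_neg_atTop_nhds_zero ENNReal.one_lt_two).comp (tendsto_add_atTop_nat 1)
end
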